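/- Let a, b, c be pairwise coprime positive integers with c² = a² + b² + ab, and let m be a positive integer such that the equilateral triangle with side length m·ab tiles into m²·ab congruent copies of the triangle with side lengths (a, b, c). Then the triangle with side lengths (m·a·b, m·b·c, m·b·(a+b)) tiles into m²·b·(a+b) congruent copies of the triangle with side lengths (a, b, c). -/

import Mathlib

noncomputable section

abbrev Plane := EuclideanSpace ℝ (Fin 2)

/-- The point (x, y) in the Euclidean plane. -/
def pt (x y : ℝ) : Plane := (WithLp.equiv 2 (Fin 2 → ℝ)).symm ![x, y]

/-- `Δ` is a triangle with side lengths `(p, q, r)`: the convex hull of points `P, Q, R`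
with `dist Q R = p`, `dist P R = q`, `dist P Q = r`. -/
def IsTriangle (p q r : ℝ) (Δ : Set Plane) : Prop :=
  ∃ P Q R : Plane, dist Q R = p ∧ dist P R = q ∧ dist P Q = r ∧
    Δ = convexHull ℝ {P, Q, R}

/-- `S` tiles into `N` congruent copies of the `(p, q, r)` triangle: there are isometries
`f 1, …, f N` of the plane and a triangle `Δ` with side lengths `(p, q, r)` such that
`S` is the union of the `f i '' Δ` and their interiors are pairwise disjoint. -/
def TilesInto (S : Set Plane) (N : ℕ) (p q r : ℝ) : Prop :=
  ∃ (f : Fin N → Plane ≃ᵢ Plane) (Δ : Set Plane),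
    IsTriangle p q r Δ ∧
    S = ⋃ i, f i '' Δ ∧
    ∀ i j : Fin N, i ≠ j → interior (f i '' Δ) ∩ interior (f j '' Δ) = ∅

/-- The equilateral triangle with side length `X`. -/
def EquilateralTri (X : ℝ) : Set Plane :=
  convexHull ℝ {pt 0 0, pt X 0, pt (X/2) (X * Real.sqrt 3 / 2)}

/-!
In the triangle `PQR` with sides `QR = ka`, `PR = kc`, `PQ = k(a + b)`, where `k = mb`, let `S` be
the point of `PQ` with `PS = kb` and `SQ = ka`. As `c² = a² + b² + ab`, Stewart's theorem gives
`RS = ka`. So the cevian `RS` cuts off the equilateral triangle `RQS` of side `ka = mab`, which is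
tiled by assumption, and leaves the triangle `RSP` with sides `ka`, `kb`, `kc`, which is cut into
`k²` tiles by equally spaced parallels to its sides.
-/

section Congruence

variable {V W : Type*} [NormedAddCommGroup V] [NormedAddCommGroup W]

lemma isometryEquiv_image_convexHull [NormedSpace ℝ V] [NormedSpace ℝ W] (f : V ≃ᵢ W)
    (s : Set V) : f '' convexHull ℝ s = convexHull ℝ (f '' s) := by
  simpa using f.toRealAffineIsometryEquiv.toAffineEquiv.toAffineMap.image_convexHull s

lemma exists_linearIsometryEquiv_apply_eq_apply_eq [InnerProductSpace ℝ V] {u v u' v' : V}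
    (hu : ‖u‖ = ‖u'‖) (hv : ‖v‖ = ‖v'‖) (huv : ‖u - v‖ = ‖u' - v'‖) :
    ∃ L : V ≃ₗᵢ[ℝ] V, L u = u' ∧ L v = v' := by
  let L₁ := (ℝ ∙ (u - u'))ᗮ.reflection
  let L₂ := (ℝ ∙ (L₁ v - v'))ᗮ.reflection
  have hL₁u : L₁ u = u' := Submodule.reflection_sub hu
  have hL₁v : ‖L₁ v‖ = ‖v'‖ := by rw [L₁.norm_map, hv]
  have hdist : ‖u' - L₁ v‖ = ‖u' - v'‖ := by rw [← hL₁u, ← map_sub, L₁.norm_map, huv, hL₁u]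
  have hmem : u' ∈ (ℝ ∙ (L₁ v - v'))ᗮ := by
    rw [Submodule.mem_orthogonal_singleton_iff_inner_left, inner_sub_right]
    have h := congrArg (· ^ 2) hdist
    simp only [norm_sub_sq_real, hL₁v] at h
    linarith
  refine ⟨L₁.trans L₂, ?_, ?_⟩
  · simp only [LinearIsometryEquiv.trans_apply, hL₁u]
    exact Submodule.reflection_mem_subspace_eq_self hmem
  · exact Submodule.reflection_sub hL₁v

lemma exists_isometryEquiv_triple [InnerProductSpace ℝ V] {P Q R P' Q' R' : V}
    (hQR : dist Q R = dist Q' R') (hPR : dist P R = dist P' R') (hPQ : dist P Q = dist P' Q') :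
    ∃ g : V ≃ᵢ V, g P = P' ∧ g Q = Q' ∧ g R = R' := by
  simp only [dist_eq_norm] at hQR hPR hPQ
  obtain ⟨L, hLP, hLQ⟩ := exists_linearIsometryEquiv_apply_eq_apply_eq hPR hQR
    (by rwa [sub_sub_sub_cancel_right, sub_sub_sub_cancel_right])
  refine ⟨((IsometryEquiv.subRight R).trans L.toIsometryEquiv).trans
    (IsometryEquiv.addRight R'), ?_, ?_, ?_⟩ <;> simp [hLP, hLQ]

end Congruence

namespace IsTriangle

variable {p q r : ℝ} {A B : Set Plane}

lemma image (hA : IsTriangle p q r A) (g : Plane ≃ᵢ Plane) : IsTriangle p q r (g '' A) := by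
  obtain ⟨P, Q, R, rfl, rfl, rfl, rfl⟩ := hA
  refine ⟨g P, g Q, g R, g.dist_eq _ _, g.dist_eq _ _, g.dist_eq _ _, ?_⟩
  simp only [isometryEquiv_image_convexHull, Set.image_insert_eq, Set.image_singleton]

lemma exists_image_eq (hA : IsTriangle p q r A) (hB : IsTriangle p q r B) :
    ∃ g : Plane ≃ᵢ Plane, g '' A = B := by
  obtain ⟨P, Q, R, hQR, hPR, hPQ, rfl⟩ := hA
  obtain ⟨P', Q', R', hQR', hPR', hPQ', rfl⟩ := hB
  obtain ⟨g, rfl, rfl, rfl⟩ := exists_isometryEquiv_triple (hQR.trans hQR'.symm)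
    (hPR.trans hPR'.symm) (hPQ.trans hPQ'.symm)
  exact ⟨g, by simp only [isometryEquiv_image_convexHull, Set.image_insert_eq,
    Set.image_singleton]⟩

end IsTriangle

lemma tilesInto_iUnion {ι : Type*} [Fintype ι] {p q r : ℝ} {Δ : Set Plane} {T : ι → Set Plane}
    (hΔ : IsTriangle p q r Δ) (hT : ∀ i, IsTriangle p q r (T i))
    (hdisj : Pairwise fun i j => Disjoint (interior (T i)) (interior (T j))) :
    TilesInto (⋃ i, T i) (Fintype.card ι) p q r := by
  choose f hf using fun i => hΔ.exists_image_eq (hT i)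
  let e := (Fintype.equivFin ι).symm
  refine ⟨fun n => f (e n), Δ, hΔ, ?_, fun i j hij => ?_⟩
  · simp only [hf, e.surjective.iUnion_comp T]
  · simpa only [hf, Set.disjoint_iff_inter_eq_empty] using hdisj (e.injective.ne hij)

namespace TilesInto

variable {S T : Set Plane} {M N : ℕ} {p q r : ℝ}

lemma image (hS : TilesInto S N p q r) (g : Plane ≃ᵢ Plane) : TilesInto (g '' S) N p q r := by
  obtain ⟨f, Δ, hΔ, rfl, hdisj⟩ := hS
  have himage (i : Fin N) : (f i).trans g '' Δ = g '' (f i '' Δ) :=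
    Set.image_comp g (f i) Δ
  have hinterior (A : Set Plane) : interior (g '' A) = g '' interior A :=
    (g.toHomeomorph.image_interior A).symm
  refine ⟨fun i => (f i).trans g, Δ, hΔ, ?_, fun i j hij => ?_⟩
  · simp only [himage, Set.image_iUnion]
  · rw [himage, himage, hinterior, hinterior, ← Set.image_inter g.injective, hdisj i j hij,
      Set.image_empty]

lemma of_isTriangle {x y z : ℝ} (hS : TilesInto S N p q r) (hSxyz : IsTriangle x y z S)
    (hTxyz : IsTriangle x y z T) : TilesInto T N p q r := by
  obtain ⟨g, rfl⟩ := hSxyz.exists_image_eq hTxyz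
  exact hS.image g

lemma union (hS : TilesInto S M p q r) (hT : TilesInto T N p q r)
    (hST : Disjoint (interior S) (interior T)) : TilesInto (S ∪ T) (M + N) p q r := by
  obtain ⟨f, Δ, hΔ, rfl, hf⟩ := hS
  obtain ⟨g, Δ', hΔ', rfl, hg⟩ := hT
  have hcross (i : Fin M) (j : Fin N) : Disjoint (interior (f i '' Δ)) (interior (g j '' Δ')) :=
    hST.mono (interior_mono (Set.subset_iUnion (fun i => f i '' Δ) i))
      (interior_mono (Set.subset_iUnion (fun j => g j '' Δ') j))
  have htiles := tilesInto_iUnion hΔ (T := Sum.elim (fun i => f i '' Δ) (fun j => g j '' Δ'))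
    (by rintro (i | j); exacts [hΔ.image (f i), hΔ'.image (g j)]) (by
      rintro (i | i) (j | j) hij
      · exact Set.disjoint_iff_inter_eq_empty.2 (hf i j (by simpa using hij))
      · exact hcross i j
      · exact (hcross j i).symm
      · exact Set.disjoint_iff_inter_eq_empty.2 (hg i j (by simpa using hij)))
  simpa [Set.iUnion_sum] using htiles

end TilesInto

-- A common interior point of the images makes `φ` surjective, hence bijective by dimension count.
lemma disjoint_interior_image_affineMap {V W : Type*} [NormedAddCommGroup V] [NormedSpace ℝ V]
    [NormedAddCommGroup W] [NormedSpace ℝ W] [FiniteDimensional ℝ V] [FiniteDimensional ℝ W]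
    (hVW : Module.finrank ℝ V = Module.finrank ℝ W) (φ : V →ᵃ[ℝ] W) {A B : Set V}
    (hAB : Disjoint (interior A) (interior B)) :
    Disjoint (interior (φ '' A)) (interior (φ '' B)) := by
  rw [Set.disjoint_left]
  intro y hyA hyB
  have hsurj : Function.Surjective φ := by
    have hspan : (⊤ : AffineSubspace ℝ V).map φ = ⊤ := by
      rw [← AffineSubspace.span_univ ℝ V V, AffineSubspace.map_span, eq_top_iff,
        ← isOpen_interior.affineSpan_eq_top ⟨y, hyA⟩]
      exact affineSpan_mono ℝ (interior_subset.trans (Set.image_mono (Set.subset_univ A)))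
    simpa [← Set.range_eq_univ] using congrArg ((↑) : AffineSubspace ℝ W → Set W) hspan
  have hinj : Function.Injective φ := by
    rwa [← AffineMap.linear_injective_iff,
      LinearMap.injective_iff_surjective_of_finrank_eq_finrank hVW, AffineMap.linear_surjective_iff]
  have hpre (C : Set V) : φ ⁻¹' interior (φ '' C) ⊆ interior C := by
    simpa only [Set.preimage_image_eq C hinj] using
      preimage_interior_subset_interior_preimage (t := φ '' C) φ.continuous_of_finiteDimensional
  obtain ⟨x, rfl⟩ := hsurj y
  exact Set.disjoint_left.1 hAB (hpre A hyA) (hpre B hyB)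

section Segment

variable {𝕜 E : Type*} [Field 𝕜] [LinearOrder 𝕜] [IsStrictOrderedRing 𝕜] [AddCommGroup E]
  [Module 𝕜 E]

lemma segment_union_segment {P Q S : E} (hS : S ∈ segment 𝕜 P Q) :
    segment 𝕜 P S ∪ segment 𝕜 S Q = segment 𝕜 P Q := by
  have hP := left_mem_segment 𝕜 P Q
  have hQ := right_mem_segment 𝕜 P Q
  refine Set.Subset.antisymm (Set.union_subset ((convex_segment P Q).segment_subset hP hS)
    ((convex_segment P Q).segment_subset hS hQ)) ?_
  rw [segment_eq_image_lineMap] at hS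
  have hopen := openSegment_subset_union P Q (Set.image_subset_range _ _ hS)
  rw [← insert_endpoints_openSegment]
  rintro x (rfl | rfl | hx)
  · exact Or.inl (left_mem_segment 𝕜 _ _)
  · exact Or.inr (right_mem_segment 𝕜 _ _)
  · rcases hopen hx with rfl | hx | hx
    exacts [Or.inl (right_mem_segment 𝕜 _ _), Or.inl (openSegment_subset_segment 𝕜 P S hx),
      Or.inr (openSegment_subset_segment 𝕜 S Q hx)]

lemma convexHull_triple_union {P Q S : E} (R : E) (hS : S ∈ segment 𝕜 P Q) :
    convexHull 𝕜 {R, P, S} ∪ convexHull 𝕜 {R, S, Q} = convexHull 𝕜 {R, P, Q} := by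
  simp only [convexHull_insert (Set.insert_nonempty _ _), convexHull_pair,
    ← convexJoin_union_right, segment_union_segment hS]

end Segment

lemma disjoint_interior_convexHull_triple {V : Type*} [NormedAddCommGroup V] [NormedSpace ℝ V]
    (hV : Module.finrank ℝ V = 2) {P Q S : V} (R : V) (hS : S ∈ segment ℝ P Q) :
    Disjoint (interior (convexHull ℝ {R, P, S})) (interior (convexHull ℝ {R, S, Q})) := by
  have : FiniteDimensional ℝ V := .of_finrank_pos (by omega)
  rw [segment_eq_image_lineMap] at hS
  obtain ⟨t, ⟨ht0, ht1⟩, rfl⟩ := hS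
  set S := AffineMap.lineMap P Q t with hS
  let φ : ℝ × ℝ →ᵃ[ℝ] V := ((LinearMap.toSpanSingleton ℝ V (S - R)).coprod
    (LinearMap.toSpanSingleton ℝ V (Q - P))).toAffineMap + AffineMap.const ℝ (ℝ × ℝ) R
  have hφ (x y : ℝ) : φ (x, y) = x • (S - R) + y • (Q - P) + R := rfl
  have hφR : φ (0, 0) = R := by simp [hφ]
  have hφS : φ (1, 0) = S := by simp [hφ]
  have hφP : φ (1, -t) = P := by rw [hφ, hS, AffineMap.lineMap_apply_module']; module
  have hφQ : φ (1, 1 - t) = Q := by rw [hφ, hS, AffineMap.lineMap_apply_module']; module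
  have hP : convexHull ℝ {R, P, S} ⊆ φ '' (Set.univ ×ˢ Set.Iic 0) := by
    refine convexHull_min ?_ ((convex_univ.prod (convex_Iic 0)).affine_image φ)
    rintro _ (rfl | rfl | rfl)
    exacts [⟨_, by simp, hφR⟩, ⟨_, by simpa, hφP⟩, ⟨_, by simp, hφS⟩]
  have hQ : convexHull ℝ {R, S, Q} ⊆ φ '' (Set.univ ×ˢ Set.Ici 0) := by
    refine convexHull_min ?_ ((convex_univ.prod (convex_Ici 0)).affine_image φ)
    rintro _ (rfl | rfl | rfl)
    exacts [⟨_, by simp, hφR⟩, ⟨_, by simp, hφS⟩, ⟨_, by simpa, hφQ⟩]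
  refine (disjoint_interior_image_affineMap (by simp [hV]) φ ?_).mono (interior_mono hP)
    (interior_mono hQ)
  simp only [interior_prod_eq, interior_Iic, interior_Ici]
  exact Set.disjoint_prod.2 (Or.inr Set.Iio_disjoint_Ioi_same)

/-- The triangle with vertices `(0, 0)`, `(0, r)` and `(r, r)`. Written with inequalities between
the coordinates, it is cut into unit triangles by the lines `x = i`, `y = j`, `y - x = n`. -/
def orderTriangle (r : ℝ) : Set (ℝ × ℝ) :=
  {x | 0 ≤ x.1 ∧ x.1 ≤ x.2 ∧ x.2 ≤ r}

/-- The half of the unit square with lower left corner `(i, j)` that lies above its diagonal. -/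
def upperHalfSquare (i j : ℕ) : Set (ℝ × ℝ) :=
  {x | i ≤ x.1 ∧ x.1 - i ≤ x.2 - j ∧ x.2 ≤ j + 1}

/-- The tiles of `orderTriangle k`, indexed by the pairs `i, j < k`. Folding the square `[0, k]²`
along its diagonal maps the upper halves of the `k²` unit squares onto them. -/
def orderTile (i j : ℕ) : Set (ℝ × ℝ) :=
  if i ≤ j then upperHalfSquare i j else Prod.swap ⁻¹' upperHalfSquare i j

/-- The index of the tile having `x` in its interior, if there is one. -/
def tileIndex (x : ℝ × ℝ) : ℕ × ℕ :=
  if x.1 - ⌊x.1⌋₊ < x.2 - ⌊x.2⌋₊ then (⌊x.1⌋₊, ⌊x.2⌋₊) else (⌊x.2⌋₊, ⌊x.1⌋₊)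

lemma orderTriangle_eq_convexHull {r : ℝ} (hr : 0 < r) :
    orderTriangle r = convexHull ℝ {(0, 0), (0, r), (r, r)} := by
  refine Set.Subset.antisymm (fun ⟨x, y⟩ ⟨hx, hxy, hy⟩ => ?_) (convexHull_min ?_ ?_)
  · refine mem_convexHull_of_exists_fintype ![(r - y) / r, (y - x) / r, x / r]
      ![(0, 0), (0, r), (r, r)] ?_ ?_ ?_ ?_
    · have h0 : 0 ≤ (r - y) / r := div_nonneg (sub_nonneg.2 hy) hr.le
      have h1 : 0 ≤ (y - x) / r := div_nonneg (sub_nonneg.2 hxy) hr.le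
      have h2 : 0 ≤ x / r := div_nonneg hx hr.le
      simp [Fin.forall_fin_succ, h0, h1, h2]
    · simp only [Fin.sum_univ_three, Matrix.cons_val]
      field
    · simp [Fin.forall_fin_succ]
    · simp [Fin.sum_univ_three, hr.ne']
  · rintro _ (rfl | rfl | rfl) <;> simp [orderTriangle, hr.le]
  · rintro x ⟨hx₀, hx, hx₁⟩ y ⟨hy₀, hy, hy₁⟩ s t hs ht hst
    refine ⟨by simp only [Prod.fst_add, Prod.smul_fst, smul_eq_mul]; positivity, ?_, ?_⟩
    · exact add_le_add (mul_le_mul_of_nonneg_left hx hs) (mul_le_mul_of_nonneg_left hy ht)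
    · exact convex_Iic r hx₁ hy₁ hs ht hst

lemma lt_of_mem_interior_of_isOpenMap {X Y : Type*} [TopologicalSpace X] [TopologicalSpace Y]
    [LinearOrder Y] [OrderTopology Y] [DenselyOrdered Y] [NoMinOrder Y] {g : X → Y}
    (hg : IsOpenMap g) {T : Set X} {c : Y} (hT : ∀ y ∈ T, c ≤ g y) {x : X}
    (hx : x ∈ interior T) : c < g x := by
  have hsub : g '' interior T ⊆ interior (Set.Ici c) :=
    (hg.image_interior_subset T).trans (interior_mono (Set.image_subset_iff.2 hT))
  rw [interior_Ici] at hsub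
  exact hsub ⟨x, hx, rfl⟩

lemma lt_of_mem_interior_upperHalfSquare {i j : ℕ} {x : ℝ × ℝ}
    (hx : x ∈ interior (upperHalfSquare i j)) :
    i < x.1 ∧ x.1 - i < x.2 - j ∧ x.2 < j + 1 := by
  have hdiff : IsOpenMap fun x : ℝ × ℝ => x.2 - x.1 :=
    (LinearMap.snd ℝ ℝ ℝ - LinearMap.fst ℝ ℝ ℝ).isOpenMap_of_finiteDimensional
      fun y => ⟨(0, y), by simp⟩
  have hneg : IsOpenMap fun x : ℝ × ℝ => -x.2 := (Homeomorph.neg ℝ).isOpenMap.comp isOpenMap_snd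
  have h₁ := lt_of_mem_interior_of_isOpenMap isOpenMap_fst (fun y hy => hy.1) hx
  have h₂ := lt_of_mem_interior_of_isOpenMap hdiff (c := j - i)
    (fun y hy => by linarith [hy.2.1]) hx
  have h₃ := lt_of_mem_interior_of_isOpenMap hneg (c := -(j + 1))
    (fun y hy => neg_le_neg hy.2.2) hx
  exact ⟨h₁, by linarith, by linarith⟩

lemma floor_eq_of_mem_interior_upperHalfSquare {i j : ℕ} {x : ℝ × ℝ}
    (hx : x ∈ interior (upperHalfSquare i j)) : ⌊x.1⌋₊ = i ∧ ⌊x.2⌋₊ = j := by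
  obtain ⟨h₁, h₂, h₃⟩ := lt_of_mem_interior_upperHalfSquare hx
  constructor <;> rw [Nat.floor_eq_iff (by linarith)] <;> constructor <;> linarith

lemma tileIndex_eq_of_mem_interior {i j : ℕ} {x : ℝ × ℝ} (hx : x ∈ interior (orderTile i j)) :
    tileIndex x = (i, j) := by
  unfold orderTile at hx
  split_ifs at hx
  · obtain ⟨hi, hj⟩ := floor_eq_of_mem_interior_upperHalfSquare hx
    have hlt := (lt_of_mem_interior_upperHalfSquare hx).2.1
    simp [tileIndex, hi, hj, hlt]
  · have hswap : x.swap ∈ interior (upperHalfSquare i j) := by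
      rwa [← Homeomorph.coe_prodComm, ← Homeomorph.preimage_interior] at hx
    obtain ⟨hi, hj⟩ := floor_eq_of_mem_interior_upperHalfSquare hswap
    have hlt := (lt_of_mem_interior_upperHalfSquare hswap).2.1
    rw [Prod.fst_swap] at hi hlt
    rw [Prod.snd_swap] at hj hlt
    simp [tileIndex, hi, hj, hlt.le]

lemma disjoint_interior_orderTile {i j i' j' : ℕ} (h : (i, j) ≠ (i', j')) :
    Disjoint (interior (orderTile i j)) (interior (orderTile i' j')) :=
  Set.disjoint_left.2 fun _ hx hx' =>
    h ((tileIndex_eq_of_mem_interior hx).symm.trans (tileIndex_eq_of_mem_interior hx'))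

lemma orderTile_subset_orderTriangle {i j k : ℕ} (hi : i < k) (hj : j < k) :
    orderTile i j ⊆ orderTriangle k := by
  have hi₁ : (i : ℝ) + 1 ≤ k := by exact_mod_cast hi
  have hj₁ : (j : ℝ) + 1 ≤ k := by exact_mod_cast hj
  unfold orderTile
  split_ifs with hij
  · have hij' : (i : ℝ) ≤ j := by exact_mod_cast hij
    rintro x ⟨h₁, h₂, h₃⟩
    refine ⟨?_, ?_, ?_⟩ <;> linarith
  · have hij' : (j : ℝ) + 1 ≤ i := by exact_mod_cast not_le.1 hij
    rintro x ⟨h₁, h₂, h₃⟩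
    simp only [Prod.fst_swap, Prod.snd_swap] at h₁ h₂ h₃
    refine ⟨?_, ?_, ?_⟩ <;> linarith

lemma exists_mem_orderTile {k : ℕ} (hk : 0 < k) {x : ℝ × ℝ} (hx : x ∈ orderTriangle k) :
    ∃ i < k, ∃ j < k, x ∈ orderTile i j := by
  obtain ⟨h₀, h₁, h₂⟩ := hx
  -- The cap at `k - 1` puts points with a coordinate equal to `k` into the last square.
  let cell (t : ℝ) : ℕ := min ⌊t⌋₊ (k - 1)
  have hcell (t : ℝ) : cell t < k := (min_le_right _ _).trans_lt (Nat.pred_lt hk.ne')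
  have hcell_le {t : ℝ} (ht : 0 ≤ t) : (cell t : ℝ) ≤ t :=
    (Nat.cast_le.2 (min_le_left _ _)).trans (Nat.floor_le ht)
  have hle_cell {t : ℝ} (ht : t ≤ k) : t ≤ cell t + 1 := by
    rcases min_choice ⌊t⌋₊ (k - 1) with h | h
    · simpa only [cell, h] using (Nat.lt_floor_add_one t).le
    · simpa only [cell, h, Nat.cast_pred hk, sub_add_cancel] using ht
  have hmono : cell x.1 ≤ cell x.2 := min_le_min_right _ (Nat.floor_mono h₁)
  have hfst := hcell_le h₀
  have hsnd := hle_cell h₂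
  rcases le_total (x.1 - cell x.1) (x.2 - cell x.2) with hle | hle
  · refine ⟨cell x.1, hcell _, cell x.2, hcell _, ?_⟩
    rw [orderTile, if_pos hmono]
    exact ⟨hfst, hle, hsnd⟩
  · rcases hmono.eq_or_lt with heq | hlt
    · refine ⟨cell x.1, hcell _, cell x.2, hcell _, ?_⟩
      rw [orderTile, if_pos hmono]
      exact ⟨hfst, by rw [heq]; linarith, hsnd⟩
    · refine ⟨cell x.2, hcell _, cell x.1, hcell _, ?_⟩
      rw [orderTile, if_neg hlt.not_ge]
      exact ⟨hcell_le (h₀.trans h₁), hle, hle_cell (h₁.trans h₂)⟩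

lemma iUnion_orderTile {k : ℕ} (hk : 0 < k) :
    ⋃ n : Fin k × Fin k, orderTile n.1 n.2 = orderTriangle k := by
  refine Set.Subset.antisymm
    (Set.iUnion_subset fun n => orderTile_subset_orderTriangle n.1.2 n.2.2) fun x hx => ?_
  obtain ⟨i, hi, j, hj, hmem⟩ := exists_mem_orderTile hk hx
  exact Set.mem_iUnion.2 ⟨(⟨i, hi⟩, ⟨j, hj⟩), hmem⟩

lemma orderTile_eq_image (i j : ℕ) :
    orderTile i j = if i ≤ j then (fun x => ((i, j) : ℝ × ℝ) + x) '' orderTriangle 1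
      else (fun x => ((j + 1, i + 1) : ℝ × ℝ) - x) '' orderTriangle 1 := by
  unfold orderTile
  split_ifs
  · ext x
    simp only [Set.image_add_left, Set.mem_preimage, orderTriangle, upperHalfSquare,
      Set.mem_ofPred_eq, Prod.fst_add, Prod.snd_add, Prod.fst_neg, Prod.snd_neg]
    constructor <;> rintro ⟨h₁, h₂, h₃⟩ <;> refine ⟨?_, ?_, ?_⟩ <;> linarith
  · rw [Set.image_eq_preimage_of_inverse (sub_sub_cancel _) (sub_sub_cancel _)]
    ext x
    simp only [Set.mem_preimage, orderTriangle, upperHalfSquare,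
      Set.mem_ofPred_eq, Prod.fst_sub, Prod.snd_sub, Prod.fst_swap, Prod.snd_swap]
    constructor <;> rintro ⟨h₁, h₂, h₃⟩ <;> refine ⟨?_, ?_, ?_⟩ <;> linarith

lemma exists_isometryEquiv_image_orderTile {V : Type*} [NormedAddCommGroup V] [NormedSpace ℝ V]
    (φ : ℝ × ℝ →ₗ[ℝ] V) (i j : ℕ) :
    ∃ f : V ≃ᵢ V, f '' (φ '' orderTriangle 1) = φ '' orderTile i j := by
  rw [orderTile_eq_image]
  split_ifs
  · exact ⟨IsometryEquiv.addLeft (φ (i, j)), by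
      simp only [Set.image_image, IsometryEquiv.addLeft_apply, map_add]⟩
  · exact ⟨IsometryEquiv.subLeft (φ (j + 1, i + 1)), by
      simp only [Set.image_image, IsometryEquiv.subLeft_apply, map_sub]⟩

lemma isTriangle_image_orderTriangle (φ : ℝ × ℝ →ₗ[ℝ] Plane) {r : ℝ} (hr : 0 < r) :
    IsTriangle (r * ‖φ (1, 0)‖) (r * ‖φ (1, 1)‖) (r * ‖φ (0, 1)‖) (φ '' orderTriangle r) := by
  have hdist (x y : ℝ × ℝ) {z : ℝ × ℝ} (h : y - x = r • z) : dist (φ x) (φ y) = r * ‖φ z‖ := by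
    rw [dist_comm, dist_eq_norm, ← map_sub, h, map_smul, norm_smul, Real.norm_of_nonneg hr.le]
  refine ⟨φ (0, 0), φ (0, r), φ (r, r), hdist _ _ (by simp), hdist _ _ (by simp),
    hdist _ _ (by simp), ?_⟩
  rw [orderTriangle_eq_convexHull hr, φ.image_convexHull]
  simp only [Set.image_insert_eq, Set.image_singleton]

lemma tilesInto_image_orderTriangle (φ : ℝ × ℝ →ₗ[ℝ] Plane) {k : ℕ} (hk : 0 < k) :
    TilesInto (φ '' orderTriangle k) (k ^ 2) ‖φ (1, 0)‖ ‖φ (1, 1)‖ ‖φ (0, 1)‖ := by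
  have hΔ : IsTriangle ‖φ (1, 0)‖ ‖φ (1, 1)‖ ‖φ (0, 1)‖ (φ '' orderTriangle 1) := by
    simpa only [one_mul] using isTriangle_image_orderTriangle φ one_pos
  have htiles := tilesInto_iUnion hΔ (T := fun n : Fin k × Fin k => φ '' orderTile n.1 n.2)
    (fun n => by
      obtain ⟨f, hf⟩ := exists_isometryEquiv_image_orderTile φ n.1 n.2
      exact hf ▸ hΔ.image f)
    (fun m n hmn => disjoint_interior_image_affineMap (by simp) φ.toAffineMap
      (disjoint_interior_orderTile (by simpa [Prod.ext_iff, Fin.ext_iff] using hmn)))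
  rwa [← Set.image_iUnion, iUnion_orderTile hk, Fintype.card_prod, Fintype.card_fin,
    ← sq] at htiles

lemma IsTriangle.tilesInto_sq {p q r : ℝ} {S : Set Plane} {k : ℕ} (hk : 0 < k)
    (hS : IsTriangle (k * p) (k * q) (k * r) S) : TilesInto S (k ^ 2) p q r := by
  have hk' : (0 : ℝ) < k := Nat.cast_pos.2 hk
  obtain ⟨P, Q, R, hQR, hPR, hPQ, -⟩ := id hS
  let φ : ℝ × ℝ →ₗ[ℝ] Plane := (LinearMap.toSpanSingleton ℝ Plane ((k : ℝ)⁻¹ • (R - Q))).coprod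
    (LinearMap.toSpanSingleton ℝ Plane ((k : ℝ)⁻¹ • (Q - P)))
  have hnorm {A B : Plane} {d : ℝ} (h : dist A B = k * d) : ‖(k : ℝ)⁻¹ • (B - A)‖ = d := by
    rw [norm_smul, norm_inv, Real.norm_of_nonneg hk'.le, ← dist_eq_norm, dist_comm, h,
      inv_mul_cancel_left₀ hk'.ne']
  have hp : ‖φ (1, 0)‖ = p := by simpa [φ] using hnorm hQR
  have hq : ‖φ (1, 1)‖ = q := by simpa [φ, ← smul_add] using hnorm hPR
  have hr : ‖φ (0, 1)‖ = r := by simpa [φ] using hnorm hPQ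
  have htriangle := isTriangle_image_orderTriangle φ hk'
  have htiles := tilesInto_image_orderTriangle φ hk
  rw [hp, hq, hr] at htriangle htiles
  exact htiles.of_isTriangle htriangle hS

lemma isTriangle_equilateralTri {X : ℝ} (hX : 0 ≤ X) : IsTriangle X X X (EquilateralTri X) := by
  have hsq : √3 ^ 2 = 3 := Real.sq_sqrt (by norm_num)
  have hdist {x y x' y' : ℝ} (h : (x - x') ^ 2 + (y - y') ^ 2 = X ^ 2) :
      dist (pt x y) (pt x' y') = X := by
    simp [EuclideanSpace.dist_eq, pt, Real.dist_eq, h, Real.sqrt_sq hX]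
  refine ⟨_, _, _, hdist ?_, hdist ?_, hdist ?_, rfl⟩
  · linear_combination X ^ 2 / 4 * hsq
  · linear_combination X ^ 2 / 4 * hsq
  · ring

section Cevian

variable {V P : Type*} [NormedAddCommGroup V] [MetricSpace P] [NormedAddTorsor V P]

lemma exists_sbtw_dist_eq [NormedSpace ℝ V] {A B : P} {x y : ℝ} (hx : 0 < x) (hy : 0 < y)
    (hAB : dist A B = x + y) : ∃ S, Sbtw ℝ A S B ∧ dist A S = x ∧ dist S B = y := by
  have hne : A ≠ B := dist_pos.1 (by rw [hAB]; positivity)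
  have hlt : x / (x + y) < 1 := (div_lt_one (by positivity)).2 (by linarith)
  refine ⟨AffineMap.lineMap A B (x / (x + y)), sbtw_lineMap_iff.2 ⟨hne, by positivity, hlt⟩,
    ?_, ?_⟩
  · rw [dist_left_lineMap, hAB, Real.norm_of_nonneg (by positivity)]
    field
  · rw [dist_lineMap_right, hAB, Real.norm_of_nonneg (sub_nonneg.2 hlt.le)]
    field

-- The distance hypotheses say that the angle at `B` is `π / 3`, by the law of cosines in `ABC`.
lemma dist_eq_dist_of_sbtw [InnerProductSpace ℝ V] {A B C S : P} (hS : Sbtw ℝ A S B)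
    (hCB : dist C B = dist S B)
    (hCA : dist C A ^ 2 = dist S B ^ 2 + dist A S ^ 2 + dist S B * dist A S) :
    dist C S = dist S B := by
  have hSB : 0 < dist S B := dist_pos.2 hS.ne_right
  have hAS : 0 < dist A S := dist_pos.2 hS.left_ne
  have hAB : dist A B = dist A S + dist S B := hS.wbtw.dist_add_dist.symm
  have hStewart := EuclideanGeometry.dist_sq_mul_dist_add_dist_sq_mul_dist C A B S
    hS.angle₁₂₃_eq_pi
  rw [hCA, hCB, hAB, dist_comm B S] at hStewart
  refine (sq_eq_sq₀ dist_nonneg dist_nonneg).1 (mul_left_cancel₀ (add_pos hAS hSB).ne' ?_)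
  linear_combination -hStewart

end Cevian

theorem stmt15_general {a b c : ℝ} (ha : 0 < a) (hb : 0 < b) (h : c ^ 2 = a ^ 2 + b ^ 2 + a * b)
    {k N : ℕ} (hk : 0 < k) (heq : TilesInto (EquilateralTri (k * a)) N a b c) {Δ : Set Plane}
    (hΔ : IsTriangle (k * a) (k * c) (k * (a + b)) Δ) : TilesInto Δ (N + k ^ 2) a b c := by
  obtain ⟨P, Q, R, hQR, hPR, hPQ, rfl⟩ := hΔ
  have hk' : (0 : ℝ) < k := Nat.cast_pos.2 hk
  obtain ⟨S, hPSQ, hPS, hSQ⟩ := exists_sbtw_dist_eq (mul_pos hk' hb) (mul_pos hk' ha)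
    (show dist P Q = k * b + k * a by rw [hPQ]; ring)
  have hRS : dist R S = k * a := hSQ ▸ dist_eq_dist_of_sbtw hPSQ (by rw [hSQ, dist_comm, hQR])
    (by rw [dist_comm, hPR, hPS, hSQ]; linear_combination (k : ℝ) ^ 2 * h)
  have hS : S ∈ segment ℝ Q P := hPSQ.symm.wbtw.mem_segment
  have hequilateral : IsTriangle (k * a) (k * a) (k * a) (convexHull ℝ {R, Q, S}) :=
    ⟨R, Q, S, by rw [dist_comm, hSQ], hRS, by rw [dist_comm, hQR], rfl⟩
  have hsimilar : IsTriangle (k * a) (k * b) (k * c) (convexHull ℝ {R, S, P}) :=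
    ⟨P, R, S, hRS, hPS, hPR, by congr 1; grind⟩
  rw [show ({P, Q, R} : Set Plane) = {R, Q, P} by grind, ← convexHull_triple_union R hS]
  exact (heq.of_isTriangle (isTriangle_equilateralTri (by positivity)) hequilateral).union
    (hsimilar.tilesInto_sq hk) (disjoint_interior_convexHull_triple (by simp) R hS)

theorem stmt15 (a b c : ℕ) (ha : 0 < a) (hb : 0 < b) (hc : 0 < c)
    (hab : Nat.Coprime a b) (hac : Nat.Coprime a c) (hbc : Nat.Coprime b c)
    (h : c ^ 2 = a ^ 2 + b ^ 2 + a * b) (m : ℕ) (hm : 0 < m)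
    (heq : TilesInto (EquilateralTri ((m : ℝ) * a * b)) (m ^ 2 * a * b) a b c) :
    ∀ Δ : Set Plane,
      IsTriangle ((m : ℝ) * a * b) ((m : ℝ) * b * c) ((m : ℝ) * b * (a + b)) Δ →
      TilesInto Δ (m ^ 2 * b * (a + b)) a b c := by
  intro Δ hΔ
  rw [show m ^ 2 * b * (a + b) = m ^ 2 * a * b + (m * b) ^ 2 by ring]
  have hcast : (m : ℝ) * a * b = ↑(m * b) * a := by push_cast; ring
  rw [hcast] at heq
  rw [hcast, ← Nat.cast_mul m b] at hΔ
  exact stmt15_general (Nat.cast_pos.2 ha) (Nat.cast_pos.2 hb) (by exact_mod_cast h)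
    (Nat.mul_pos hm hb) heq hΔ
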